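/- arXiv:2401.13698 — 3 statements merged into one kernel-verified Lean document; each statement's English description precedes it below -/
import Mathlib

section
/- Let n ≥ 2 and let G be a real symmetric n×n matrix which is indecomposable, has G i i = 1 for every i, G i j ≤ 0 for all i ≠ j, is positive semidefinite (xᵀ G x ≥ 0 for all x), and is singular (there exists x ≠ 0 with G *ᵥ x = 0). Then the kernel of G is one-dimensional and is spanned by a vector all of whose coordinates are positive, and for every nonempty proper subset S of the index set the principal submatrix of G with rows and columns in S is positive definite. -/
open Matrix

/-- A real square matrix indexed by `ι` is *indecomposable* if there is no subset `S` of `ι`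
with `S` nonempty and `S ≠ univ` such that `M i j = 0` whenever `i ∈ S` and `j ∉ S`. -/
def Matrix.Indecomposable {ι : Type*} (M : Matrix ι ι ℝ) : Prop :=
  ¬ ∃ S : Set ι, S.Nonempty ∧ S ≠ Set.univ ∧ ∀ i ∈ S, ∀ j ∉ S, M i j = 0

theorem pgm_key {n : ℕ} (G : Matrix (Fin n) (Fin n) ℝ) (hsym : G.IsSymm)
    (hind : G.Indecomposable) (hoff : ∀ i j, i ≠ j → G i j ≤ 0)
    (hpsd : ∀ x : Fin n → ℝ, 0 ≤ x ⬝ᵥ G.mulVec x)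
    (x : Fin n → ℝ) (hx : x ≠ 0) (h0 : x ⬝ᵥ G.mulVec x = 0) :
    G.mulVec (fun i => |x i|) = 0 ∧ ∀ i, 0 < |x i| := by
  have hP : G.PosSemidef := by
    refine Matrix.PosSemidef.of_dotProduct_mulVec_nonneg ?_ ?_
    · rw [Matrix.IsHermitian, Matrix.conjTranspose_eq_transpose_of_trivial]; exact hsym
    · intro y; simpa using hpsd y
  have hle : (fun i => |x i|) ⬝ᵥ G.mulVec (fun i => |x i|) ≤ x ⬝ᵥ G.mulVec x := by
    simp only [dotProduct, Matrix.mulVec, Finset.mul_sum]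
    refine Finset.sum_le_sum fun i _ => Finset.sum_le_sum fun j _ => ?_
    by_cases hij : i = j
    · subst hij
      exact le_of_eq (by linear_combination G i i * abs_mul_abs_self (x i))
    · have h1 := hoff i j hij
      have h2 : x i * x j ≤ |x i| * |x j| := by rw [← abs_mul]; exact le_abs_self _
      nlinarith [mul_le_mul_of_nonpos_left h2 h1]
  have hz : G.mulVec (fun i => |x i|) = 0 := by
    refine (hP.dotProduct_mulVec_zero_iff _).1 ?_
    have := hpsd (fun i => |x i|)
    simpa using le_antisymm (hle.trans h0.le) this
  refine ⟨hz, fun i => ?_⟩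
  by_contra hi
  have hi0 : x i = 0 := by simpa using hi
  refine hind ⟨{k | x k = 0}, ⟨i, hi0⟩, ?_, ?_⟩
  · intro hu
    apply hx
    funext k
    exact (Set.eq_univ_iff_forall.1 hu k)
  · intro a ha b hb
    simp only [Set.mem_setOf_eq] at ha hb
    have hs : ∑ j, G a j * |x j| = 0 := congrFun hz a
    have hn : ∀ j ∈ Finset.univ, G a j * |x j| ≤ 0 := by
      intro j _
      by_cases hj : a = j
      · subst hj; simp [ha]
      · exact mul_nonpos_of_nonpos_of_nonneg (hoff a j hj) (abs_nonneg _)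
    have := (Finset.sum_eq_zero_iff_of_nonpos hn).1 hs b (Finset.mem_univ _)
    simpa [hb] using this

/-- An indecomposable, singular, positive semidefinite symmetric matrix with unit diagonal
and nonpositive off-diagonal entries has a one-dimensional kernel spanned by a positive
vector, and all proper principal submatrices are positive definite. -/
theorem parabolic_gram_matrix (n : ℕ) (hn : 2 ≤ n)
    (G : Matrix (Fin n) (Fin n) ℝ) (hsym : G.IsSymm) (hind : G.Indecomposable)
    (hdiag : ∀ i, G i i = 1) (hoff : ∀ i j, i ≠ j → G i j ≤ 0)
    (hpsd : ∀ x : Fin n → ℝ, 0 ≤ x ⬝ᵥ G.mulVec x)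
    (hsing : ∃ x : Fin n → ℝ, x ≠ 0 ∧ G.mulVec x = 0) :
    (∃ v : Fin n → ℝ, (∀ i, 0 < v i) ∧ G.mulVec v = 0 ∧
      ∀ w : Fin n → ℝ, G.mulVec w = 0 → ∃ c : ℝ, w = c • v) ∧
    (∀ S : Finset (Fin n), S.Nonempty → S ≠ Finset.univ →
      (G.submatrix (fun i : {i // i ∈ S} => (i : Fin n))
        (fun i : {i // i ∈ S} => (i : Fin n))).PosDef) := by
  have key := pgm_key G hsym hind hoff hpsd
  obtain ⟨x, hx, hGx⟩ := hsing
  have hk := key x hx (by simp [hGx])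
  constructor
  · refine ⟨fun i => |x i|, hk.2, hk.1, fun w hw => ?_⟩
    let i0 : Fin n := ⟨0, by omega⟩
    refine ⟨w i0 / |x i0|, ?_⟩
    by_contra hne
    have hu : G.mulVec (w - (w i0 / |x i0|) • fun i => |x i|) = 0 := by
      rw [Matrix.mulVec_sub, Matrix.mulVec_smul, hw, hk.1]; simp
    have := (key _ (sub_ne_zero.2 hne) (by rw [hu]; simp)).2 i0
    simp [(abs_pos.1 (hk.2 i0))] at this
  · intro S _ hS
    refine Matrix.PosDef.of_dotProduct_mulVec_pos ?_ ?_
    · rw [Matrix.IsHermitian, Matrix.conjTranspose_eq_transpose_of_trivial]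
      exact hsym.submatrix _
    · intro y hy
      obtain ⟨k, hkS⟩ : ∃ k, k ∉ S := by
        by_contra h
        push Not at h
        exact hS (Finset.eq_univ_iff_forall.2 h)
      let z : Fin n → ℝ := fun i => if h : i ∈ S then y ⟨i, h⟩ else 0
      have hzS : ∀ i : {i // i ∈ S}, z i = y i := fun i => by simp [z]
      have hz0 : ∀ i, i ∉ S → z i = 0 := fun i hi => by simp [z, hi]
      have hsum : ∀ f : Fin n → ℝ, (∀ i, i ∉ S → f i = 0) →
          ∑ i : {i // i ∈ S}, f i = ∑ i, f i := by
        intro f hf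
        rw [Finset.sum_coe_sort S f]
        exact Finset.sum_subset (Finset.subset_univ _) fun i _ hi => hf i hi
      have heq : star y ⬝ᵥ (G.submatrix (fun i : {i // i ∈ S} => (i : Fin n))
          (fun i : {i // i ∈ S} => (i : Fin n))).mulVec y = z ⬝ᵥ G.mulVec z := by
        simp only [dotProduct, Matrix.mulVec, star_trivial, Matrix.submatrix_apply, ← hzS]
        rw [← hsum (fun i => z i * ∑ j, G i j * z j) (fun i hi => by simp [hz0 i hi])]
        refine Finset.sum_congr rfl fun i _ => ?_
        rw [← hsum (fun j => G i j * z j) (fun j hj => by simp [hz0 j hj])]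
      rw [heq]
      refine lt_of_le_of_ne (hpsd z) fun h => ?_
      have hzne : z ≠ 0 := by
        intro h'
        apply hy
        funext i
        rw [← hzS i, h']; rfl
      have := (key z hzne h.symm).2 k
      simp [hz0 k hkS] at this
end

section
/- Let n ≥ 2 and let G be a real symmetric n×n matrix which is indecomposable, has G i i = 1 for every i, and G i j ≤ 0 for all i ≠ j. Then for every nonempty proper subset S of the index set, the smallest eigenvalue of the principal submatrix G_S (rows and columns restricted to S) is strictly greater than the smallest eigenvalue of G. -/
/-- For an indecomposable symmetric matrix with unit diagonal and nonpositive off-diagonal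
entries, the smallest eigenvalue of every proper principal submatrix is strictly greater
than the smallest eigenvalue of the matrix itself. -/
theorem smallest_eigenvalue_strict_mono (n : ℕ) (hn : 2 ≤ n)
    (G : Matrix (Fin n) (Fin n) ℝ) (hsym : G.IsSymm) (hind : G.Indecomposable)
    (hdiag : ∀ i, G i i = 1) (hoff : ∀ i j, i ≠ j → G i j ≤ 0)
    (S : Finset (Fin n)) (hS : S.Nonempty) (hSne : S ≠ Finset.univ)
    (lam mu : ℝ)
    (hlam : IsLeast {t : ℝ | ∃ w : Fin n → ℝ, w ≠ 0 ∧ G.mulVec w = t • w} lam)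
    (hmu : IsLeast {t : ℝ | ∃ w : {i // i ∈ S} → ℝ, w ≠ 0 ∧
      (G.submatrix (fun i : {i // i ∈ S} => (i : Fin n))
        (fun i : {i // i ∈ S} => (i : Fin n))).mulVec w = t • w} mu) :
    lam < mu := by
  classical
  obtain ⟨⟨w, hw0, hw⟩, -⟩ := hmu
  have hl := hlam.2
  by_contra hcon
  push Not at hcon
  set A : Matrix (Fin n) (Fin n) ℝ := G - lam • (1 : Matrix (Fin n) (Fin n) ℝ) with hAdef
  have hAv : ∀ x : Fin n → ℝ, A.mulVec x = G.mulVec x - lam • x := by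
    intro x
    rw [hAdef, Matrix.sub_mulVec, Matrix.smul_mulVec, Matrix.one_mulVec]
  have hGs : ∀ i j, G i j = G j i := fun i j => hsym.apply j i
  have hAh : A.IsHermitian := by
    ext i j
    simp only [hAdef, Matrix.conjTranspose_apply, Matrix.sub_apply, Matrix.smul_apply,
      Matrix.one_apply, star_trivial, hGs i j, eq_comm (a := i) (b := j)]
  have hpsd : A.PosSemidef := by
    rw [hAh.posSemidef_iff_eigenvalues_nonneg]
    intro i
    have h1 := hAh.mulVec_eigenvectorBasis i
    rw [hAv] at h1
    have h2 : lam ≤ hAh.eigenvalues i + lam := by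
      apply hl
      refine ⟨⇑(hAh.eigenvectorBasis i), ?_, ?_⟩
      · intro h0
        have := hAh.eigenvectorBasis.orthonormal.ne_zero i
        apply this
        ext k
        exact congrFun h0 k
      · rw [add_smul, ← h1]; simp
    simpa using h2
  set u : Fin n → ℝ := fun i => if h : i ∈ S then w ⟨i, h⟩ else 0 with hu
  have huS : ∀ i, i ∉ S → u i = 0 := fun i hi => by simp [hu, hi]
  have huG : ∀ i, u i * G.mulVec u i = mu * (u i * u i) := by
    intro i
    by_cases hi : i ∈ S
    · have h1 := congrFun hw ⟨i, hi⟩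
      have h2 : G.mulVec u i = mu * u i := by
        have h3 : u i = w ⟨i, hi⟩ := by simp [hu, hi]
        rw [h3]
        simp only [Matrix.mulVec, dotProduct, Matrix.submatrix_apply, Pi.smul_apply,
          smul_eq_mul] at h1 ⊢
        rw [← h1, ← Finset.sum_subset (Finset.subset_univ S)
          (fun x _ hx => by rw [huS x hx, mul_zero]), ← Finset.sum_coe_sort S]
        apply Finset.sum_congr rfl
        intro x _
        simp [hu]
      rw [h2]; ring
    · rw [huS i hi]; ring
  set v : Fin n → ℝ := fun i => |u i| with hv
  have hvA : dotProduct v (A.mulVec v) ≤ 0 := by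
    have h1 : dotProduct v (A.mulVec v) ≤ dotProduct u (A.mulVec u) := by
      simp only [dotProduct, Matrix.mulVec, Finset.mul_sum]
      apply Finset.sum_le_sum; intro i _
      apply Finset.sum_le_sum; intro j _
      by_cases hij : i = j
      · subst hij
        have := abs_mul_abs_self (u i)
        apply le_of_eq
        simp only [hv]
        linear_combination A i i * this
      · have h3 : A i j = G i j := by simp [hAdef, hij]
        rw [h3]
        have h4 := hoff i j hij
        have h5 : u i * u j ≤ |u i| * |u j| := by rw [← abs_mul]; exact le_abs_self _
        simp only [hv]
        nlinarith [mul_nonneg (sub_nonneg.2 h5) (neg_nonneg.2 h4)]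
    refine h1.trans ?_
    rw [hAv]
    simp only [dotProduct, Pi.sub_apply, Pi.smul_apply, smul_eq_mul]
    apply Finset.sum_nonpos; intro i _
    have := huG i
    nlinarith [mul_nonneg (sub_nonneg.2 hcon) (mul_self_nonneg (u i))]
  have hAv0 : A.mulVec v = 0 := by
    rw [← hpsd.dotProduct_mulVec_zero_iff]
    apply le_antisymm
    · simpa using hvA
    · exact hpsd.dotProduct_mulVec_nonneg v
  apply hind
  refine ⟨{i | v i ≠ 0}, ?_, ?_, ?_⟩
  · obtain ⟨k, hk⟩ := Function.ne_iff.1 hw0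
    refine ⟨k, ?_⟩
    simpa [hv, hu] using hk
  · intro h
    apply hSne
    ext i
    simp only [Finset.mem_univ, iff_true]
    by_contra hi
    have : i ∈ {i | v i ≠ 0} := h ▸ Set.mem_univ i
    apply this
    simp [hv, huS i hi]
  · intro i hi j hj
    have hj0 : v j = 0 := by simpa using hj
    have h1 : G.mulVec v j = 0 := by
      have := congrFun (hAv v) j
      rw [hAv0] at this
      simpa [hj0] using this.symm
    have h2 : ∀ k ∈ Finset.univ, G j k * v k ≤ 0 := by
      intro k _
      by_cases hjk : j = k
      · rw [← hjk, hj0, mul_zero]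
      · exact mul_nonpos_of_nonpos_of_nonneg (hoff j k hjk) (abs_nonneg _)
    have h3 := (Finset.sum_eq_zero_iff_of_nonpos h2).1 h1 i (Finset.mem_univ i)
    rw [hGs]
    exact (mul_eq_zero.1 h3).resolve_right hi
end

section
/- Let d ≥ 2 and let B be the Minkowski bilinear form on ℝ^{d+1}. Let e, f ∈ ℝ^{d+1} be linearly independent vectors with B(e,e) = 1 and B(f,f) = 1. Then there exists x ∈ ℝ^{d+1} with B(x,x) = −1, x d > 0, B(x,e) = 0 and B(x,f) = 0 if and only if |B(e,f)| < 1. -/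
/-- The Minkowski bilinear form of signature `(d,1)` on `ℝ^{d+1}`:
`B(x,y) = (∑_{i=0}^{d-1} x i * y i) - x d * y d`. -/
def minkowskiForm (d : ℕ) (x y : Fin (d + 1) → ℝ) : ℝ :=
  (∑ i : Fin d, x i.castSucc * y i.castSucc) - x (Fin.last d) * y (Fin.last d)

theorem mf_comm (d : ℕ) (x y : Fin (d + 1) → ℝ) :
    minkowskiForm d x y = minkowskiForm d y x := by
  simp only [minkowskiForm, mul_comm]

theorem mf_comb (d : ℕ) (x y z : Fin (d + 1) → ℝ) (a b : ℝ) :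
    minkowskiForm d (a • x + b • y) z = a * minkowskiForm d x z + b * minkowskiForm d y z := by
  simp only [minkowskiForm, Pi.add_apply, Pi.smul_apply, smul_eq_mul, add_mul,
    Finset.sum_add_distrib, mul_assoc, ← Finset.mul_sum]
  ring

theorem mf_pos (d : ℕ) (x v : Fin (d + 1) → ℝ) (hx : minkowskiForm d x x = -1)
    (hxv : minkowskiForm d x v = 0) (hv : v ≠ 0) : 0 < minkowskiForm d v v := by
  have cs := Finset.sum_mul_sq_le_sq_mul_sq Finset.univ
    (fun i : Fin d => x i.castSucc) (fun i : Fin d => v i.castSucc)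
  simp only [minkowskiForm, ← sq] at *
  have hX : 0 ≤ ∑ i : Fin d, x i.castSucc ^ 2 := Finset.sum_nonneg fun i _ => sq_nonneg _
  have hV : 0 ≤ ∑ i : Fin d, v i.castSucc ^ 2 := Finset.sum_nonneg fun i _ => sq_nonneg _
  have h1 : (∑ i : Fin d, x i.castSucc * v i.castSucc) = x (Fin.last d) * v (Fin.last d) := by
    linarith
  have h2 : (∑ i : Fin d, x i.castSucc ^ 2) = x (Fin.last d) ^ 2 - 1 := by linarith
  rw [h1, h2] at cs
  rw [h2] at hX
  rcases hV.eq_or_lt with h0 | h0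
  · exfalso
    apply hv
    have hl : v (Fin.last d) = 0 := by
      rw [← h0] at cs
      have : v (Fin.last d) ^ 2 ≤ 0 := by nlinarith [sq_nonneg (v (Fin.last d))]
      exact pow_eq_zero_iff (two_ne_zero) |>.1 (le_antisymm this (sq_nonneg _))
    have hz := (Finset.sum_eq_zero_iff_of_nonneg (fun i _ => sq_nonneg _)).1 h0.symm
    funext i
    refine Fin.lastCases hl (fun j => ?_) i
    exact pow_eq_zero_iff (two_ne_zero) |>.1 (hz j (Finset.mem_univ _))
  · by_contra hn
    push Not at hn
    nlinarith [mul_nonneg (sq_nonneg (x (Fin.last d))) (neg_nonneg.2 hn)]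

/-- Two hyperplanes `H_e` and `H_f` of the hyperboloid model intersect in `ℍ^d`
if and only if `|B(e,f)| < 1`. -/
theorem hyperplanes_intersect_iff (d : ℕ) (hd : 2 ≤ d)
    (e f : Fin (d + 1) → ℝ) (hef : LinearIndependent ℝ ![e, f])
    (he : minkowskiForm d e e = 1) (hf : minkowskiForm d f f = 1) :
    (∃ x : Fin (d + 1) → ℝ, minkowskiForm d x x = -1 ∧ 0 < x (Fin.last d) ∧
      minkowskiForm d x e = 0 ∧ minkowskiForm d x f = 0) ↔
    |minkowskiForm d e f| < 1 := by
  have hfe := mf_comm d f e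
  set c := minkowskiForm d e f with hc
  rw [← sq_lt_one_iff_abs_lt_one]
  constructor
  · rintro ⟨x, hx, -, hxe, hxf⟩
    have hv : (-c) • e + (1 : ℝ) • f ≠ 0 := by
      intro h
      have := (LinearIndependent.pair_iff.1 hef) _ _ h
      exact one_ne_zero this.2
    have := mf_pos d x _ hx (by rw [mf_comm, mf_comb, mf_comm d e, mf_comm d f, hxe, hxf]; ring) hv
    rw [mf_comb, mf_comm d e, mf_comm d f, mf_comb, mf_comb, he, hf, hfe, ← hc] at this
    nlinarith
  · intro h
    have hD : 0 < 1 - c ^ 2 := by linarith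
    let p : Fin (d + 1) → ℝ := Pi.single (Fin.last d) 1
    have hp : ∀ z, minkowskiForm d z p = - z (Fin.last d) := by
      intro z
      simp [minkowskiForm, p, Pi.single_apply, Fin.castSucc_ne_last]
    obtain ⟨a, ha⟩ : ∃ a, a = minkowskiForm d e p := ⟨_, rfl⟩
    obtain ⟨b, hb⟩ : ∃ b, b = minkowskiForm d f p := ⟨_, rfl⟩
    have hpp : minkowskiForm d p p = -1 := by rw [hp]; simp [p]
    obtain ⟨y, hy⟩ : ∃ y, y = (1 : ℝ) • p + (-1 : ℝ) •
      (((a - c * b) / (1 - c ^ 2)) • e + ((b - c * a) / (1 - c ^ 2)) • f) := ⟨_, rfl⟩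
    have hye : minkowskiForm d y e = 0 := by
      rw [hy, mf_comb, mf_comb, he, hfe, mf_comm d p, ← ha]
      field_simp
      ring
    have hyf : minkowskiForm d y f = 0 := by
      rw [hy, mf_comb, mf_comb, hf, ← hc, mf_comm d p, ← hb]
      field_simp
      ring
    have hyp : minkowskiForm d y p = -1 - ((a - c * b) ^ 2 / (1 - c ^ 2) + b ^ 2) := by
      rw [hy, mf_comb, mf_comb, hpp, ← ha, ← hb]
      field_simp
      ring
    have hyy : minkowskiForm d y y = minkowskiForm d y p := by
      conv_lhs => rw [hy, mf_comb, mf_comb, ← hy, mf_comm d e, mf_comm d f, hye, hyf, mf_comm d p]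
      ring
    have hneg : minkowskiForm d y p < 0 := by
      have : 0 ≤ (a - c * b) ^ 2 / (1 - c ^ 2) := by positivity
      nlinarith [sq_nonneg b]
    have hylast : 0 < y (Fin.last d) := by have := hp y; linarith
    obtain ⟨s, hs⟩ : ∃ s, s = Real.sqrt (y (Fin.last d)) := ⟨_, rfl⟩
    have hs0 : 0 < s := hs ▸ Real.sqrt_pos.2 hylast
    have hs2 : s ^ 2 = y (Fin.last d) := hs ▸ Real.sq_sqrt hylast.le
    have hsc : ∀ z, minkowskiForm d (s⁻¹ • y) z = s⁻¹ * minkowskiForm d y z := by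
      intro z
      have := mf_comb d y y z s⁻¹ 0
      simpa using this
    refine ⟨s⁻¹ • y, ?_, ?_, ?_, ?_⟩
    · rw [hsc, mf_comm, hsc, hyy, hp, ← hs2]
      field_simp
    · simp only [Pi.smul_apply, smul_eq_mul]; positivity
    · rw [hsc, hye, mul_zero]
    · rw [hsc, hyf, mul_zero]
end
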